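/- Let φ be an endomorphism of ℙ¹ defined over a number field K with good reduction at a nonzero prime 𝔭 of K. Then for all points P, Q ∈ ℙ¹(K), δ_𝔭(φ(P), φ(Q)) ≥ δ_𝔭(P, Q). -/

import Mathlib

open NumberField IsDedekindDomain MvPolynomial
open scoped Classical nonZeroDivisors

set_option synthInstance.maxHeartbeats 1000000
set_option maxHeartbeats 1000000

noncomputable section

/-- The projective line over `K`. -/
abbrev P1 (K : Type*) [Field K] := Projectivization K (Fin 2 → K)

variable {K : Type*} [Field K] [NumberField K]

/-- The additive `v`-adic valuation (order) of `x ∈ K`, with junk value `0` at `x = 0`,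
normalized so that it is surjective onto `ℤ`. -/
def ordAt (v : HeightOneSpectrum (𝓞 K)) (x : K) : ℤ :=
  if hx : x = 0 then 0
  else - Multiplicative.toAdd (WithZero.unzero ((v.valuation K).ne_zero_iff.mpr hx))

/-- `min (v(x), v(y))` for a pair of coordinates, not both zero. -/
def minOrd (v : HeightOneSpectrum (𝓞 K)) (x y : K) : ℤ :=
  if x = 0 then ordAt v y else if y = 0 then ordAt v x else min (ordAt v x) (ordAt v y)

/-- The `v`-adic logarithmic distance between two points of `ℙ¹(K)`:
`δ_v(P,Q) = v(x₁y₂ - x₂y₁) - min(v x₁, v y₁) - min(v x₂, v y₂)`, with value `⊤` when `P = Q`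
(it is independent of the choice of homogeneous coordinates, so we compute it on the chosen
representatives). -/
def logDist (v : HeightOneSpectrum (𝓞 K)) (P Q : P1 K) : WithTop ℤ :=
  if P = Q then ⊤
  else ((ordAt v (P.rep 0 * Q.rep 1 - P.rep 1 * Q.rep 0)
        - minOrd v (P.rep 0) (P.rep 1) - minOrd v (Q.rep 0) (Q.rep 1) : ℤ) : WithTop ℤ)

/-- An endomorphism of `ℙ¹` of degree `d` defined over `K`, given by a pair of homogeneous
forms of degree `d` with no common zero over the algebraic closure, together with the induced
self-map of `ℙ¹(K)`. -/
structure P1Map (K : Type*) [Field K] (d : ℕ) where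
  toFun : P1 K → P1 K
  F : MvPolynomial (Fin 2) K
  G : MvPolynomial (Fin 2) K
  homF : F.IsHomogeneous d
  homG : G.IsHomogeneous d
  coprime : ∀ x y : AlgebraicClosure K,
    aeval ![x, y] F = 0 → aeval ![x, y] G = 0 → x = 0 ∧ y = 0
  compat : ∀ (x y : K) (hxy : ![x, y] ≠ 0)
    (h : ![eval ![x, y] F, eval ![x, y] G] ≠ 0),
    toFun (Projectivization.mk K ![x, y] hxy) =
      Projectivization.mk K ![eval ![x, y] F, eval ![x, y] G] h

variable {d : ℕ}

/-- `φ` has good reduction at the finite place `v`: some representing pair of forms has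
coefficients in the valuation ring at `v`, not all in the maximal ideal, and the reductions
of the two forms modulo `v` have no common zero in `ℙ¹` of the algebraic closure of the
residue field. -/
def GoodReductionAt (φ : P1Map K d) (v : HeightOneSpectrum (𝓞 K)) : Prop :=
  ∃ c : K, c ≠ 0 ∧
    ∃ F₀ G₀ : MvPolynomial (Fin 2) (v.valuation (K := K)).valuationSubring,
      MvPolynomial.map ((v.valuation (K := K)).valuationSubring.subtype) F₀ = C c * φ.F ∧
      MvPolynomial.map ((v.valuation (K := K)).valuationSubring.subtype) G₀ = C c * φ.G ∧
      ((∃ m, F₀.coeff m ∉ IsLocalRing.maximalIdeal (v.valuation (K := K)).valuationSubring) ∨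
        (∃ m, G₀.coeff m ∉ IsLocalRing.maximalIdeal (v.valuation (K := K)).valuationSubring)) ∧
      ∀ x y : AlgebraicClosure
          (IsLocalRing.ResidueField (v.valuation (K := K)).valuationSubring),
        eval ![x, y] (MvPolynomial.map
          ((algebraMap (IsLocalRing.ResidueField (v.valuation (K := K)).valuationSubring)
              (AlgebraicClosure _)).comp
            (IsLocalRing.residue _)) F₀) = 0 →
        eval ![x, y] (MvPolynomial.map
          ((algebraMap (IsLocalRing.ResidueField (v.valuation (K := K)).valuationSubring)
              (AlgebraicClosure _)).comp
            (IsLocalRing.residue _)) G₀) = 0 →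
        x = 0 ∧ y = 0

/-- `φ` has good reduction outside `S`, where `S` consists of all archimedean places together
with the finite places in `T`. -/
def GoodReductionOutside (φ : P1Map K d) (T : Finset (HeightOneSpectrum (𝓞 K))) : Prop :=
  ∀ v ∉ T, GoodReductionAt φ v

/-- `P` is a periodic point of `φ`. -/
def IsPeriodicPoint (φ : P1Map K d) (P : P1 K) : Prop :=
  ∃ n, 0 < n ∧ φ.toFun^[n] P = P

/-- `P` is a preperiodic point of `φ`. -/
def IsPreperiodicPoint (φ : P1Map K d) (P : P1 K) : Prop :=
  ∃ m, IsPeriodicPoint φ (φ.toFun^[m] P)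

/-- `P` is a tail point of `φ`: preperiodic but not periodic. -/
def IsTailPoint (φ : P1Map K d) (P : P1 K) : Prop :=
  IsPreperiodicPoint φ P ∧ ¬ IsPeriodicPoint φ P

/-- The set `Tail(φ,K,P)` of `K`-rational tail points of `P`: non-periodic points having `P`
in their forward orbit. -/
def TailOf (φ : P1Map K d) (P : P1 K) : Set (P1 K) :=
  {Q | ¬ IsPeriodicPoint φ Q ∧ ∃ n, φ.toFun^[n] Q = P}

/-- `P = [a:b]` is a critical point of `φ = [F:G]`: the algebraic condition
`φ([x:y]) = φ([a:b])`, i.e. the form `G(a,b)·F(X,Y) - F(a,b)·G(X,Y)`, vanishes to order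
at least `2` at `[a:b]`. -/
def IsCriticalPt (φ : P1Map K d) (P : P1 K) : Prop :=
  ∃ (a b : K) (hab : ![a, b] ≠ 0), P = Projectivization.mk K ![a, b] hab ∧
    (C b * X 0 - C a * X 1) ^ 2 ∣
      (C (eval ![a, b] φ.G) * φ.F - C (eval ![a, b] φ.F) * φ.G)

/-- `P` belongs to a critical cycle of `φ`: it lies in the orbit of a critical periodic
point. -/
def InCriticalCycle (φ : P1Map K d) (P : P1 K) : Prop :=
  ∃ Q, IsCriticalPt φ Q ∧ IsPeriodicPoint φ Q ∧ ∃ n, φ.toFun^[n] Q = P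

/-- The cardinality `|S|` of the set of places `S` consisting of all archimedean places
together with the finite places in `T`. -/
def sCard (K : Type*) [Field K] [NumberField K] (T : Finset (HeightOneSpectrum (𝓞 K))) : ℕ :=
  T.card + Fintype.card (InfinitePlace K)

/-- `B(s) = 2^{16 s}`. -/
def Bconst (s : ℕ) : ℕ := 2 ^ (16 * s)

/-- `C(n,s) = e^{(6n)^{3n} (n s + 1 - n)}`. -/
def Cconst (n s : ℕ) : ℝ := Real.exp ((6 * n : ℝ) ^ (3 * n) * (n * s + 1 - n))

/-- `CV(d,s) = (3B(s)+13)d + 27B(s) + C(5,s) + 6C(3,s) + 32`. -/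
def CVconst (d s : ℕ) : ℝ :=
  (3 * (Bconst s : ℝ) + 13) * d + 27 * (Bconst s : ℝ) + Cconst 5 s + 6 * Cconst 3 s + 32

/-- `L₁(d,s) = (d-1)(1 + d(1 + B(s)))`. -/
def L1const (d s : ℕ) : ℕ := (d - 1) * (1 + d * (1 + Bconst s))

/-- `L₂(d,s) = max{(2(C(3,s)+2)+1)d + 1, (d-1)(1 + B(s)(B(s) + C(3,s) + 3))}`. -/
def L2const (d s : ℕ) : ℝ :=
  max ((2 * (Cconst 3 s + 2) + 1) * d + 1)
    (((d : ℝ) - 1) * (1 + (Bconst s : ℝ) * ((Bconst s : ℝ) + Cconst 3 s + 3)))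

/-- `L₃(d,s) = ((1 + 3B(s))B(s) + 1)(d-1)`. -/
def L3const (d s : ℕ) : ℕ := ((1 + 3 * Bconst s) * Bconst s + 1) * (d - 1)

/-- `L₄(d,s) = (C(3,s) + 3)(d-1)`. -/
def L4const (d s : ℕ) : ℝ := (Cconst 3 s + 3) * ((d : ℝ) - 1)

end

/-!
The multiplicative counterpart of the logarithmic distance is the chordal distance, which equals
`|x₁y₂ - x₂y₁|` on coordinates scaled so that `max(|x|, |y|) = 1`. Good reduction means that
`(F, G)` sends such coordinates to coordinates scaled in the same way. Since `F` and `G` are forms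
of the same degree, `F(P) G(Q) - G(P) F(Q)` is divisible by `x₁y₂ - x₂y₁` over the valuation ring,
so the chordal distance cannot grow.
-/

section BinaryForms

variable {R : Type*} [CommRing R]

theorem mul_sub_mul_dvd_pow_mul_pow_sub (x₁ y₁ x₂ y₂ : R) {a b c e : ℕ} (h : a + b = c + e) :
    x₁ * y₂ - y₁ * x₂ ∣
      (x₁ ^ a * y₁ ^ b) * (x₂ ^ c * y₂ ^ e) - (x₁ ^ c * y₁ ^ e) * (x₂ ^ a * y₂ ^ b) := by
  wlog hca : c ≤ a generalizing a b c e
  · rw [dvd_sub_comm]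
    exact this h.symm (le_of_not_ge hca)
  obtain ⟨k, rfl⟩ := Nat.exists_eq_add_of_le hca
  obtain rfl : e = b + k := by lia
  have factored : (x₁ ^ (c + k) * y₁ ^ b) * (x₂ ^ c * y₂ ^ (b + k)) -
      (x₁ ^ c * y₁ ^ (b + k)) * (x₂ ^ (c + k) * y₂ ^ b) =
        (x₁ * x₂) ^ c * (y₁ * y₂) ^ b * ((x₁ * y₂) ^ k - (y₁ * x₂) ^ k) := by
    ring
  rw [factored]
  exact (sub_dvd_pow_sub_pow _ _ k).mul_left _

theorem mul_sub_mul_dvd_eval_mul_eval_sub {F G : MvPolynomial (Fin 2) R} {d : ℕ}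
    (hF : F.IsHomogeneous d) (hG : G.IsHomogeneous d) (p q : Fin 2 → R) :
    p 0 * q 1 - p 1 * q 0 ∣ eval p F * eval q G - eval p G * eval q F := by
  have degree_eq {H : MvPolynomial (Fin 2) R} (hH : H.IsHomogeneous d) {m : Fin 2 →₀ ℕ}
      (hm : m ∈ H.support) : m 0 + m 1 = d := by
    rw [← hH (mem_support_iff.mp hm), Finsupp.weight_apply, Finsupp.sum_fintype _ _ (by simp)]
    simp
  simp only [eval_eq', Fin.prod_univ_two]
  rw [mul_comm (∑ m ∈ G.support, _), Finset.sum_mul_sum, Finset.sum_mul_sum,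
    ← Finset.sum_sub_distrib]
  refine Finset.dvd_sum fun m hm => ?_
  rw [← Finset.sum_sub_distrib]
  refine Finset.dvd_sum fun n hn => ?_
  convert (mul_sub_mul_dvd_pow_mul_pow_sub (p 0) (p 1) (q 0) (q 1)
    ((degree_eq hF hm).trans (degree_eq hG hn).symm)).mul_left (coeff m F * coeff n G) using 1
  ring

end BinaryForms

section Scaling

variable {R S σ : Type*} [CommRing R] [CommRing S] {f : R →+* S} {c : S}
  {H₀ : MvPolynomial σ R} {H : MvPolynomial σ S}

theorem isHomogeneous_of_map_eq_C_mul (hf : Function.Injective f) (h : map f H₀ = C c * H) {d : ℕ}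
    (hH : H.IsHomogeneous d) : H₀.IsHomogeneous d :=
  .of_map hf <| by simpa [h] using (isHomogeneous_C _ c).mul hH

theorem eval₂_eq_mul_eval_of_map_eq_C_mul (h : map f H₀ = C c * H) (p : σ → S) :
    eval₂ f p H₀ = c * eval p H := by
  rw [← eval_map, h, map_mul, eval_C]

end Scaling

section Reduction

variable {R σ : Type*} [CommRing R] [IsLocalRing R]

/-- The reductions of `F` and `G` have no common nontrivial zero over the residue field. Only
zeros rational over the residue field are excluded, not those over its algebraic closure. -/
def NoCommonResidueZero (F G : MvPolynomial σ R) : Prop :=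
  ∀ p : σ → IsLocalRing.ResidueField R,
    eval p (map (IsLocalRing.residue R) F) = 0 → eval p (map (IsLocalRing.residue R) G) = 0 → p = 0

theorem NoCommonResidueZero.of_forall_algebra {F G : MvPolynomial σ R} {k : Type*} [Field k]
    [Algebra (IsLocalRing.ResidueField R) k]
    (h : ∀ p : σ → k,
      eval p (map ((algebraMap _ k).comp (IsLocalRing.residue R)) F) = 0 →
      eval p (map ((algebraMap _ k).comp (IsLocalRing.residue R)) G) = 0 → p = 0) :
    NoCommonResidueZero F G := by
  intro p hF hG
  have algebraMap_comp_eq_zero : algebraMap _ k ∘ p = 0 := by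
    apply h <;> rw [← map_map, ← map_eval] <;> simp [hF, hG]
  funext i
  simpa using congrFun algebraMap_comp_eq_zero i

theorem NoCommonResidueZero.isUnit_eval_or {F G : MvPolynomial σ R}
    (h : NoCommonResidueZero F G) {p : σ → R} (hp : ∃ i, IsUnit (p i)) :
    IsUnit (eval p F) ∨ IsUnit (eval p G) := by
  obtain ⟨i, hi⟩ := hp
  by_contra! hFG
  have residue_eval_eq_zero {H : MvPolynomial σ R} (hH : ¬IsUnit (eval p H)) :
      eval (IsLocalRing.residue R ∘ p) (map (IsLocalRing.residue R) H) = 0 := by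
    rwa [← map_eval, ← not_ne_iff, IsLocalRing.residue_ne_zero_iff_isUnit]
  exact (IsLocalRing.residue_ne_zero_iff_isUnit (p i)).mpr hi
    (congrFun (h _ (residue_eval_eq_zero hFG.1) (residue_eval_eq_zero hFG.2)) i)

end Reduction

section ChordalDistance

variable {K Γ₀ : Type*} [Field K] [LinearOrderedCommGroupWithZero Γ₀] (v : Valuation K Γ₀)

/-- The sup norm on `K²` attached to `v`, by which homogeneous coordinates are normalized. -/
def supVal (p : Fin 2 → K) : Γ₀ :=
  max (v (p 0)) (v (p 1))

theorem supVal_smul (a : K) (p : Fin 2 → K) : supVal v (a • p) = v a * supVal v p := by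
  simp only [supVal, Pi.smul_apply, smul_eq_mul, map_mul]
  exact mul_right_mono.map_max.symm

theorem supVal_eq_zero_iff {p : Fin 2 → K} : supVal v p = 0 ↔ p = 0 := by
  simp [supVal, funext_iff, Fin.forall_fin_two]

theorem supVal_eq_one_of_exists_isUnit {p : Fin 2 → v.valuationSubring}
    (hp : ∃ i, IsUnit (p i)) : supVal v (algebraMap v.valuationSubring K ∘ p) = 1 := by
  obtain ⟨i, hi⟩ := hp
  refine le_antisymm (max_le (p 0).2 (p 1).2) ?_
  rw [← (Valuation.integer.integers v).one_of_isUnit hi]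
  fin_cases i
  exacts [le_max_left _ _, le_max_right _ _]

/-- The `v`-adic chordal distance `v(x₁y₂ - x₂y₁) / (max(v x₁, v y₁) max(v x₂, v y₂))` on `ℙ¹(K)`,
computed on the chosen representatives. It is the multiplicative counterpart of `logDist`: for a
finite place of a number field, `logDist` is minus its logarithm. -/
noncomputable def chordalDist (P Q : P1 K) : Γ₀ :=
  v (P.rep 0 * Q.rep 1 - P.rep 1 * Q.rep 0) / (supVal v P.rep * supVal v Q.rep)

theorem chordalDist_mk {p q : Fin 2 → K} (hp : p ≠ 0) (hq : q ≠ 0) :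
    chordalDist v (.mk K p hp) (.mk K q hq) =
      v (p 0 * q 1 - p 1 * q 0) / (supVal v p * supVal v q) := by
  obtain ⟨a, ha⟩ := Projectivization.exists_smul_eq_mk_rep K p hp
  obtain ⟨b, hb⟩ := Projectivization.exists_smul_eq_mk_rep K q hq
  have ha₀ : v a ≠ 0 := v.ne_zero_iff.mpr a.ne_zero
  have hb₀ : v b ≠ 0 := v.ne_zero_iff.mpr b.ne_zero
  have minor_smul : (a • p) 0 * (b • q) 1 - (a • p) 1 * (b • q) 0 =
      a * b * (p 0 * q 1 - p 1 * q 0) := by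
    simp only [Pi.smul_apply, Units.smul_def, smul_eq_mul]
    ring
  rw [chordalDist, ← ha, ← hb, minor_smul, Units.smul_def, Units.smul_def, supVal_smul,
    supVal_smul, map_mul, map_mul, mul_mul_mul_comm, mul_div_mul_left _ _ (mul_ne_zero ha₀ hb₀)]

theorem chordalDist_eq_zero_iff {P Q : P1 K} : chordalDist v P Q = 0 ↔ P = Q := by
  have minor_ne_zero_iff : P.rep 0 * Q.rep 1 - P.rep 1 * Q.rep 0 ≠ 0 ↔ P ≠ Q := by
    rw [← Projectivization.independent_pair_iff_ne, Projectivization.independent_iff]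
    have rep_comp_eq_row : Projectivization.rep ∘ ![P, Q] = (Matrix.of ![P.rep, Q.rep]).row := by
      ext i; fin_cases i <;> rfl
    rw [rep_comp_eq_row, Matrix.linearIndependent_rows_iff_isUnit, Matrix.isUnit_iff_isUnit_det,
      Matrix.det_fin_two, isUnit_iff_ne_zero]
    rfl
  simp [chordalDist, supVal_eq_zero_iff, P.rep_nonzero, Q.rep_nonzero,
    not_iff_not.mp minor_ne_zero_iff]

theorem algebraMap_comp_ne_zero {p : Fin 2 → v.valuationSubring} (hp : ∃ i, IsUnit (p i)) :
    algebraMap v.valuationSubring K ∘ p ≠ 0 := by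
  rw [ne_eq, ← supVal_eq_zero_iff v, supVal_eq_one_of_exists_isUnit v hp]
  exact one_ne_zero

theorem exists_isUnit_and_eq_mk (P : P1 K) :
    ∃ (p : Fin 2 → v.valuationSubring) (hp : ∃ i, IsUnit (p i)),
      P = .mk K (algebraMap v.valuationSubring K ∘ p) (algebraMap_comp_ne_zero v hp) := by
  obtain ⟨i, hi⟩ := Finite.exists_max fun i => v (P.rep i)
  have hi₀ : P.rep i ≠ 0 := fun h =>
    P.rep_nonzero (funext fun j => by simpa [h] using hi j)
  let p (j : Fin 2) : v.valuationSubring :=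
    ⟨P.rep j / P.rep i, by
      rw [Valuation.mem_valuationSubring_iff, map_div₀]
      exact div_le_one_of_le₀ (hi j) zero_le⟩
  have hpi : p i = 1 := Subtype.ext (div_self hi₀)
  refine ⟨p, ⟨i, hpi ▸ isUnit_one⟩, ?_⟩
  conv_lhs => rw [← P.mk_rep]
  rw [Projectivization.mk_eq_mk_iff']
  exact ⟨P.rep i, funext fun j => mul_div_cancel₀ (P.rep j) hi₀⟩

theorem chordalDist_mk_of_exists_isUnit {p q : Fin 2 → v.valuationSubring}
    (hp : ∃ i, IsUnit (p i)) (hq : ∃ i, IsUnit (q i)) :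
    chordalDist v (.mk K _ (algebraMap_comp_ne_zero v hp))
      (.mk K _ (algebraMap_comp_ne_zero v hq)) =
        v (p 0 * q 1 - p 1 * q 0 : v.valuationSubring) := by
  rw [chordalDist_mk, supVal_eq_one_of_exists_isUnit v hp, supVal_eq_one_of_exists_isUnit v hq,
    one_mul, div_one]
  rfl

end ChordalDistance

section IntegralModel

variable {K Γ₀ : Type*} [Field K] [LinearOrderedCommGroupWithZero Γ₀] {v : Valuation K Γ₀} {d : ℕ}
  {F G : MvPolynomial (Fin 2) v.valuationSubring} {f : P1 K → P1 K}

/-- The self-map `f` of `ℙ¹(K)` is induced by the forms `F`, `G` of degree `d` over the valuation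
ring of `v`, and the reductions of `F` and `G` have no common zero in `ℙ¹` of the residue field.
It is the form in which good reduction enters, with the same restriction to rational zeros as in
`NoCommonResidueZero`. -/
structure IsNondegenerateModel (v : Valuation K Γ₀) (d : ℕ)
    (F G : MvPolynomial (Fin 2) v.valuationSubring) (f : P1 K → P1 K) : Prop where
  homF : F.IsHomogeneous d
  homG : G.IsHomogeneous d
  noCommonResidueZero : NoCommonResidueZero F G
  apply_mk : ∀ (p : Fin 2 → K) (hp : p ≠ 0) (h : ![aeval p F, aeval p G] ≠ 0),
    f (.mk K p hp) = .mk K ![aeval p F, aeval p G] h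

theorem IsNondegenerateModel.exists_isUnit_eval (h : IsNondegenerateModel v d F G f)
    {p : Fin 2 → v.valuationSubring} (hp : ∃ i, IsUnit (p i)) :
    ∃ i, IsUnit (![eval p F, eval p G] i) :=
  Fin.exists_fin_two.mpr (h.noCommonResidueZero.isUnit_eval_or hp)

theorem IsNondegenerateModel.apply_mk_of_exists_isUnit (h : IsNondegenerateModel v d F G f)
    {p : Fin 2 → v.valuationSubring} (hp : ∃ i, IsUnit (p i)) :
    f (.mk K _ (algebraMap_comp_ne_zero v hp)) =
      .mk K _ (algebraMap_comp_ne_zero v (h.exists_isUnit_eval hp)) := by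
  have eval_eq : ![aeval (algebraMap v.valuationSubring K ∘ p) F,
      aeval (algebraMap v.valuationSubring K ∘ p) G] =
        algebraMap v.valuationSubring K ∘ ![eval p F, eval p G] := by
    ext i
    fin_cases i <;> exact aeval_algebraMap_apply ..
  have eval_ne_zero := algebraMap_comp_ne_zero v (h.exists_isUnit_eval hp)
  rw [← eval_eq] at eval_ne_zero
  rw [h.apply_mk _ _ eval_ne_zero]
  congr 1

theorem logDist_le_logDist_image_of_good_reduction_general
    (h : IsNondegenerateModel v d F G f) (P Q : P1 K) :
    chordalDist v (f P) (f Q) ≤ chordalDist v P Q := by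
  obtain ⟨p, hp, rfl⟩ := exists_isUnit_and_eq_mk v P
  obtain ⟨q, hq, rfl⟩ := exists_isUnit_and_eq_mk v Q
  rw [h.apply_mk_of_exists_isUnit hp, h.apply_mk_of_exists_isUnit hq,
    chordalDist_mk_of_exists_isUnit v (h.exists_isUnit_eval hp) (h.exists_isUnit_eval hq),
    chordalDist_mk_of_exists_isUnit v hp hq]
  exact (Valuation.integer.integers v).le_of_dvd
    (mul_sub_mul_dvd_eval_mul_eval_sub h.homF h.homG p q)

end IntegralModel

section LogDist

variable {K : Type*} [Field K] [NumberField K] {v : HeightOneSpectrum (𝓞 K)}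

theorem ordAt_eq_neg_log (x : K) : ordAt v x = -WithZero.log (v.valuation K x) := by
  unfold ordAt
  split_ifs with hx
  · simp [hx]
  · rw [WithZero.toAdd_unzero_eq_log]

theorem minOrd_eq_neg_log_supVal (p : Fin 2 → K) :
    minOrd v (p 0) (p 1) = -WithZero.log (supVal (v.valuation K) p) := by
  unfold minOrd supVal
  split_ifs with h₀ h₁
  · simp [h₀, ordAt_eq_neg_log]
  · simp [h₁, ordAt_eq_neg_log]
  · have log_le_log_iff {i j : Fin 2} (hi : p i ≠ 0) (hj : p j ≠ 0) :=
      WithZero.log_le_log ((v.valuation K).ne_zero_iff.mpr hi) ((v.valuation K).ne_zero_iff.mpr hj)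
    rw [ordAt_eq_neg_log, ordAt_eq_neg_log, min_neg_neg]
    rcases le_total (v.valuation K (p 0)) (v.valuation K (p 1)) with h | h
    · rw [max_eq_right h, max_eq_right ((log_le_log_iff h₀ h₁).mpr h)]
    · rw [max_eq_left h, max_eq_left ((log_le_log_iff h₁ h₀).mpr h)]

theorem logDist_of_ne {P Q : P1 K} (h : P ≠ Q) :
    logDist v P Q = ((-WithZero.log (chordalDist (v.valuation K) P Q) : ℤ) : WithTop ℤ) := by
  have chordalDist_ne_zero := (chordalDist_eq_zero_iff (v.valuation K)).not.mpr h
  obtain ⟨minor_ne_zero, supVal_mul_ne_zero⟩ := div_ne_zero_iff.mp chordalDist_ne_zero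
  obtain ⟨supVal_P_ne_zero, supVal_Q_ne_zero⟩ := mul_ne_zero_iff.mp supVal_mul_ne_zero
  rw [logDist, if_neg h, ordAt_eq_neg_log, minOrd_eq_neg_log_supVal,
    minOrd_eq_neg_log_supVal, chordalDist, WithZero.log_div minor_ne_zero supVal_mul_ne_zero,
    WithZero.log_mul supVal_P_ne_zero supVal_Q_ne_zero]
  congr 1
  ring

theorem logDist_le_logDist_iff {P Q P' Q' : P1 K} :
    logDist v P Q ≤ logDist v P' Q' ↔
      chordalDist (v.valuation K) P' Q' ≤ chordalDist (v.valuation K) P Q := by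
  rcases eq_or_ne P' Q' with rfl | h'
  · simp [logDist, (chordalDist_eq_zero_iff (v.valuation K)).mpr]
  have chordalDist_ne_zero' := (chordalDist_eq_zero_iff (v.valuation K)).not.mpr h'
  rcases eq_or_ne P Q with rfl | h
  · simp [logDist, h', (chordalDist_eq_zero_iff (v.valuation K)).mpr, chordalDist_ne_zero']
  have chordalDist_ne_zero := (chordalDist_eq_zero_iff (v.valuation K)).not.mpr h
  rw [logDist_of_ne h, logDist_of_ne h', WithTop.coe_le_coe, neg_le_neg_iff,
    WithZero.log_le_log chordalDist_ne_zero' chordalDist_ne_zero]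

theorem GoodReductionAt.exists_isNondegenerateModel {d : ℕ} {φ : P1Map K d}
    (hφ : GoodReductionAt φ v) :
    ∃ F G, IsNondegenerateModel (v.valuation K) d F G φ.toFun := by
  obtain ⟨c, -, F, G, hF, hG, -, no_common_zero⟩ := hφ
  refine ⟨F, G, isHomogeneous_of_map_eq_C_mul Subtype.val_injective hF φ.homF,
    isHomogeneous_of_map_eq_C_mul Subtype.val_injective hG φ.homG, ?_, ?_⟩
  · refine .of_forall_algebra (k := AlgebraicClosure
      (IsLocalRing.ResidueField (v.valuation K).valuationSubring)) fun p hpF hpG => ?_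
    rw [← FinVec.etaExpand_eq p] at hpF hpG
    exact funext (Fin.forall_fin_two.mpr (no_common_zero _ _ hpF hpG))
  · intro p hp h
    obtain ⟨x, y, rfl⟩ : ∃ x y, p = ![x, y] := ⟨_, _, (FinVec.etaExpand_eq p).symm⟩
    have smul_eq : ![aeval ![x, y] F, aeval ![x, y] G] =
        c • ![eval ![x, y] φ.F, eval ![x, y] φ.G] := by
      rw [Matrix.smul_vec2]
      exact Matrix.vec2_eq (eval₂_eq_mul_eval_of_map_eq_C_mul hF _)
        (eval₂_eq_mul_eval_of_map_eq_C_mul hG _)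
    have eval_ne_zero := right_ne_zero_of_smul (smul_eq ▸ h)
    rw [φ.compat x y hp eval_ne_zero, eq_comm, Projectivization.mk_eq_mk_iff']
    exact ⟨c, smul_eq.symm⟩

end LogDist

/-- **Proposition (good reduction does not decrease the logarithmic distance).**
If `φ` has good reduction at `𝔭`, then `δ_𝔭(φ(P),φ(Q)) ≥ δ_𝔭(P,Q)` for all
`P, Q ∈ ℙ¹(K)`. -/
theorem logDist_le_logDist_image_of_good_reduction
    {K : Type*} [Field K] [NumberField K]
    {d : ℕ} (φ : P1Map K d) (v : HeightOneSpectrum (𝓞 K))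
    (hgr : GoodReductionAt φ v) (P Q : P1 K) :
    logDist v P Q ≤ logDist v (φ.toFun P) (φ.toFun Q) := by
  obtain ⟨F, G, hFG⟩ := hgr.exists_isNondegenerateModel
  exact logDist_le_logDist_iff.mpr (logDist_le_logDist_image_of_good_reduction_general hFG P Q)
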